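/- arXiv:0902.3311 — 2 statements merged into one kernel-verified Lean document; each statement's English description precedes it below -/
import Mathlib

section
/- Let d ≥ 1, 1 ≤ p < ∞, 1 ≤ r < ∞ and s > d/r. Set s' = s − (d/r − d/p)₊, where x₊ = max(x,0). Then for every ε > 0, the set { c ∈ b^{s,∞}_r : c ∈ b^{s'+ε,∞}_p } is a Haar-null subset of b^{s,∞}_r. -/
open MeasureTheory
open scoped ENNReal BigOperators

/-- The space of wavelet-type coefficient sequences `c = (c_{j,k})`, `j ∈ ℕ`,
`k ∈ {0,…,2^j−1}^d`. -/
abbrev BSeq (d : ℕ) := (j : ℕ) → (Fin d → Fin (2 ^ j)) → ℝ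

/-- The `j`-th term `2^{(s−d/r+d/2)j} (Σ_k |c_{j,k}|^r)^{1/r}` of the Besov quasi-norm. -/
noncomputable def besovNormAt (d : ℕ) (s r : ℝ) (c : BSeq d) (j : ℕ) : ℝ :=
  (2 : ℝ) ^ ((s - (d : ℝ) / r + (d : ℝ) / 2) * (j : ℝ)) *
    (∑ k : Fin d → Fin (2 ^ j), |c j k| ^ r) ^ (1 / r)

/-- Membership in the Besov sequence space `b^{s,∞}_r`:
`sup_j 2^{(s−d/r+d/2)j} (Σ_k |c_{j,k}|^r)^{1/r} < ∞`. -/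
def MemBesov (d : ℕ) (s r : ℝ) (c : BSeq d) : Prop :=
  ∃ C : ℝ, ∀ j : ℕ, besovNormAt d s r c j ≤ C

/-- The weak Besov quasi-norm
`‖c‖_{W(w,p)} = sup_{λ>0} λ^w Σ_{j≥0} 2^{j(dp/2−d)} #{k : |c_{j,k}| > λ}`, valued in `[0,∞]`. -/
noncomputable def wBesovNorm (d : ℕ) (w p : ℝ) (c : BSeq d) : ℝ≥0∞ :=
  ⨆ lam : Set.Ioi (0 : ℝ),
    ENNReal.ofReal ((lam : ℝ) ^ w) *
      ∑' j : ℕ, ENNReal.ofReal ((2 : ℝ) ^ (((d : ℝ) * p / 2 - (d : ℝ)) * (j : ℝ))) *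
        (Nat.card {k : Fin d → Fin (2 ^ j) // (lam : ℝ) < |c j k|} : ℝ≥0∞)

/-- Membership in the weak Besov sequence space `W(w,p)`. -/
def MemWBesov (d : ℕ) (w p : ℝ) (c : BSeq d) : Prop :=
  wBesovNorm d w p c ≠ ⊤

/-- The Besov sequence space `b^{s,∞}_r` as a type. -/
def BesovSp (d : ℕ) (s r : ℝ) := {c : BSeq d // MemBesov d s r c}

/-- The extended distance on sequences associated with the Besov quasi-norm. -/
noncomputable def besovEDist (d : ℕ) (s r : ℝ) (c c' : BSeq d) : ℝ≥0∞ :=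
  ⨆ j : ℕ, ENNReal.ofReal (besovNormAt d s r (c - c') j)

/-- A set `S ⊆ b^{s,∞}_r` is Haar-null (relative to a topology `τ` on `b^{s,∞}_r`) if it is
contained in a Borel set `A` carrying a compactly supported Borel probability measure `μ`
all of whose translates of `A` are null. -/
def IsHaarNullBesov (d : ℕ) (s r : ℝ) (τ : TopologicalSpace (BesovSp d s r))
    (S : Set (BesovSp d s r)) : Prop :=
  ∃ A : Set (BesovSp d s r), S ⊆ A ∧ MeasurableSet[@borel _ τ] A ∧
    ∃ μ : @Measure (BesovSp d s r) (@borel _ τ),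
      @IsProbabilityMeasure _ (@borel _ τ) μ ∧
      (∃ K : Set (BesovSp d s r), @IsCompact _ τ K ∧ μ Kᶜ = 0) ∧
      ∀ x : BesovSp d s r, μ {y : BesovSp d s r | ∃ a ∈ A, y.1 = x.1 + a.1} = 0

/-- `τ` is the quasi-norm topology of `b^{s,∞}_r`: around every point, the balls of
`besovEDist` form a basis of neighbourhoods. -/
def IsBesovTopology (d : ℕ) (s r : ℝ) (τ : TopologicalSpace (BesovSp d s r)) : Prop :=
  ∀ x : BesovSp d s r, (@nhds _ τ x).HasBasis (fun ε : ℝ≥0∞ => 0 < ε)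
    (fun ε => {y : BesovSp d s r | besovEDist d s r x.1 y.1 < ε})

/-- The minimax exponent `α̃`. -/
noncomputable def alphaTilde (d : ℕ) (s r p : ℝ) : ℝ :=
  if p * (d : ℝ) / (2 * s + (d : ℝ)) < r then 2 * s / (2 * s + (d : ℝ))
  else 2 * (s - (d : ℝ) / r + (d : ℝ) / p) / (2 * (s - (d : ℝ) / r) + (d : ℝ))

/-- The irreducibility index `J(j,k)`: the smallest `J` such that `k = 2^{j−J} K` for some
`K ∈ {0,…,2^J−1}^d`, i.e. the smallest `J` with `2^{j−J} ∣ k_i` for all `i`. -/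
def irredIndex (d : ℕ) (j : ℕ) (k : Fin d → Fin (2 ^ j)) : ℕ :=
  Nat.find (p := fun J : ℕ => ∀ i : Fin d, 2 ^ (j - J) ∣ (k i : ℕ)) ⟨j, fun i => by simp⟩

/-- The saturating sequence `g`, with `g_{j,k} = j^{−(1+3/r)} 2^{−(s−d/r+d/2)j} 2^{−(d/r)J(j,k)}`
for `j ≥ 1` and `g_{0,k} = 0`. -/
noncomputable def gSeq (d : ℕ) (s r : ℝ) : BSeq d := fun j k =>
  if j = 0 then 0
  else (j : ℝ) ^ (-(1 + 3 / r)) * (2 : ℝ) ^ (-(s - (d : ℝ) / r + (d : ℝ) / 2) * (j : ℝ)) *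
    (2 : ℝ) ^ (-((d : ℝ) / r) * (irredIndex d j k : ℝ))

/-!
The space `b^{σ,∞}_p` is a linear subspace `W` of the space of all sequences. For
`σ > s − (d/r − d/p)₊` it does not contain `b^{s,∞}_r`: the coefficients which are extremal for
`b^{s,∞}_r` and constant on each level (if `r ≥ p`), or supported on one index per level (if
`r ≤ p`), lie outside `W`. Let `g` be such a sequence. The probe is the uniform law on the segment
`[0, 1] • g`. Two distinct points of the line `ℝ g` in the same translate of `W` would differ by a
nonzero multiple of `g` lying in `W`, so the probe charges no translate of `W`.
-/

section Inequalities

lemma add_rpow_le_two_rpow_mul_rpow_add_rpow {a b q : ℝ} (ha : 0 ≤ a) (hb : 0 ≤ b)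
    (hq : 0 ≤ q) : (a + b) ^ q ≤ 2 ^ q * (a ^ q + b ^ q) := by
  lift a to NNReal using ha
  lift b to NNReal using hb
  have h := ENNReal.add_rpow_le_two_rpow_mul_rpow_add_rpow (a : ℝ≥0∞) b hq
  rw [← ENNReal.coe_ofNat, ← ENNReal.coe_add] at h
  simp only [← ENNReal.coe_rpow_of_nonneg _ hq] at h
  exact_mod_cast h

lemma sum_abs_add_rpow_rpow_le {ι : Type*} (t : Finset ι) (f g : ι → ℝ) {q : ℝ} (hq : 0 < q) :
    (∑ i ∈ t, |f i + g i| ^ q) ^ (1 / q) ≤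
      2 * 2 ^ (1 / q) * ((∑ i ∈ t, |f i| ^ q) ^ (1 / q) + (∑ i ∈ t, |g i| ^ q) ^ (1 / q)) := by
  have hsum (h : ι → ℝ) : 0 ≤ ∑ i ∈ t, |h i| ^ q := by positivity
  calc (∑ i ∈ t, |f i + g i| ^ q) ^ (1 / q)
      ≤ (2 ^ q * (∑ i ∈ t, |f i| ^ q + ∑ i ∈ t, |g i| ^ q)) ^ (1 / q) := by
        rw [← Finset.sum_add_distrib, Finset.mul_sum]
        gcongr with i
        calc |f i + g i| ^ q ≤ (|f i| + |g i|) ^ q := by gcongr; exact abs_add_le _ _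
          _ ≤ 2 ^ q * (|f i| ^ q + |g i| ^ q) :=
            add_rpow_le_two_rpow_mul_rpow_add_rpow (abs_nonneg _) (abs_nonneg _) hq.le
    _ = 2 * (∑ i ∈ t, |f i| ^ q + ∑ i ∈ t, |g i| ^ q) ^ (1 / q) := by
        rw [Real.mul_rpow (by positivity) (add_nonneg (hsum f) (hsum g)), one_div,
          Real.rpow_rpow_inv two_pos.le hq.ne']
    _ ≤ 2 * (2 ^ (1 / q) * ((∑ i ∈ t, |f i| ^ q) ^ (1 / q) + (∑ i ∈ t, |g i| ^ q) ^ (1 / q))) := by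
        gcongr
        exact add_rpow_le_two_rpow_mul_rpow_add_rpow (hsum f) (hsum g) (by positivity)
    _ = _ := (mul_assoc _ _ _).symm

lemma exists_forall_rpow_mul_natCast_le_iff {x b : ℝ} (hx : 1 < x) :
    (∃ C : ℝ, ∀ j : ℕ, x ^ (b * j) ≤ C) ↔ b ≤ 0 := by
  refine ⟨fun ⟨C, hC⟩ => ?_, fun hb => ⟨1, fun j => ?_⟩⟩
  · by_contra! hb
    obtain ⟨n, hn⟩ := pow_unbounded_of_one_lt C (Real.one_lt_rpow hx hb)
    rw [← Real.rpow_mul_natCast (zero_le_one.trans hx.le)] at hn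
    exact (hC n).not_gt hn
  · exact Real.rpow_le_one_of_one_le_of_nonpos hx.le
      (mul_nonpos_of_nonpos_of_nonneg hb j.cast_nonneg)

end Inequalities

section Probe

lemma subsingleton_setOf_smul_sub_mem {K V : Type*} [DivisionRing K] [AddCommGroup V] [Module K V]
    (W : Submodule K V) {g : V} (hg : g ∉ W) (x : V) : {t : K | t • g - x ∈ W}.Subsingleton := by
  intro t ht u hu
  by_contra hne
  have hmem : (t - u) • g ∈ W := by
    have h := W.sub_mem ht hu
    rwa [sub_sub_sub_cancel_right, ← sub_smul] at h
  exact hg ((W.smul_mem_iff (sub_ne_zero.2 hne)).1 hmem)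

lemma exists_isProbabilityMeasure_of_injective_path {X : Type*} [TopologicalSpace X] [T2Space X]
    [MeasurableSpace X] [BorelSpace X] {f : unitInterval → X} (hf : Continuous f)
    (hinj : Function.Injective f) :
    ∃ μ : Measure X, IsProbabilityMeasure μ ∧ (∃ K, IsCompact K ∧ μ Kᶜ = 0) ∧
      ∀ A : Set X, (f ⁻¹' A).Subsingleton → μ A = 0 := by
  have hemb : MeasurableEmbedding f := (hf.isClosedEmbedding hinj).measurableEmbedding
  refine ⟨volume.map f, Measure.isProbabilityMeasure_map hf.aemeasurable,
    ⟨Set.range f, isCompact_range hf, ?_⟩, fun A hA => ?_⟩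
  · rw [hemb.map_apply, Set.preimage_compl, Set.preimage_range, Set.compl_univ, measure_empty]
  · rw [hemb.map_apply]
    exact hA.measure_zero _

end Probe

section BesovNorm

variable {d : ℕ} {s r : ℝ}

lemma besovNormAt_smul (hr : 0 < r) (a : ℝ) (c : BSeq d) (j : ℕ) :
    besovNormAt d s r (a • c) j = |a| * besovNormAt d s r c j := by
  simp only [besovNormAt, Pi.smul_apply, smul_eq_mul, abs_mul]
  simp only [Real.mul_rpow (abs_nonneg _) (abs_nonneg _), ← Finset.mul_sum]
  rw [Real.mul_rpow (by positivity) (by positivity), one_div,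
    Real.rpow_rpow_inv (abs_nonneg _) hr.ne', mul_left_comm]

lemma besovNormAt_add_le (hr : 0 < r) (c c' : BSeq d) (j : ℕ) :
    besovNormAt d s r (c + c') j ≤
      2 * 2 ^ (1 / r) * (besovNormAt d s r c j + besovNormAt d s r c' j) := by
  simp only [besovNormAt]
  rw [← mul_add, mul_left_comm]
  gcongr
  exact sum_abs_add_rpow_rpow_le Finset.univ (c j) (c' j) hr

lemma two_rpow_mul_abs_le_besovNormAt (hr : 0 < r) (c : BSeq d) (j : ℕ)
    (k : Fin d → Fin (2 ^ j)) :
    (2 : ℝ) ^ ((s - d / r + d / 2) * j) * |c j k| ≤ besovNormAt d s r c j := by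
  have hk : |c j k| ^ r ≤ ∑ k, |c j k| ^ r :=
    Finset.single_le_sum (f := fun k => |c j k| ^ r) (fun k _ => by positivity)
      (Finset.mem_univ k)
  unfold besovNormAt
  gcongr
  calc |c j k| = (|c j k| ^ r) ^ (1 / r) := by
        rw [one_div, Real.rpow_rpow_inv (abs_nonneg _) hr.ne']
    _ ≤ _ := by gcongr

lemma measurableSet_setOf_memBesov : MeasurableSet {c : BSeq d | MemBesov d s r c} := by
  have hmeas (j : ℕ) : Measurable fun c : BSeq d => besovNormAt d s r c j := by
    unfold besovNormAt
    fun_prop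
  simpa only [MemBesov, bddAbove_def, Set.forall_mem_range] using
    measurableSet_bddAbove_range hmeas

lemma MemBesov.smul (hr : 0 < r) {c : BSeq d} (hc : MemBesov d s r c) (a : ℝ) :
    MemBesov d s r (a • c) := by
  obtain ⟨C, hC⟩ := hc
  refine ⟨|a| * C, fun j => ?_⟩
  rw [besovNormAt_smul hr]
  gcongr
  exact hC j

lemma MemBesov.add (hr : 0 < r) {c c' : BSeq d} (hc : MemBesov d s r c)
    (hc' : MemBesov d s r c') : MemBesov d s r (c + c') := by
  obtain ⟨C, hC⟩ := hc
  obtain ⟨C', hC'⟩ := hc'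
  refine ⟨2 * 2 ^ (1 / r) * (C + C'), fun j => (besovNormAt_add_le hr c c' j).trans ?_⟩
  gcongr
  exacts [hC j, hC' j]

lemma memBesov_zero (hr : 0 < r) : MemBesov d s r 0 :=
  ⟨0, fun j => by rw [← zero_smul ℝ (0 : BSeq d), besovNormAt_smul hr, abs_zero, zero_mul]⟩

/-- The Besov sequence space `b^{s,∞}_r` as a linear subspace of the space of all sequences. -/
def besovSubmodule (d : ℕ) (s : ℝ) {r : ℝ} (hr : 0 < r) : Submodule ℝ (BSeq d) where
  carrier := {c | MemBesov d s r c}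
  add_mem' hc hc' := hc.add hr hc'
  zero_mem' := memBesov_zero hr
  smul_mem' a _ hc := hc.smul hr a

end BesovNorm

section Saturation

variable {d : ℕ} {s q a : ℝ}

/-- The sequence with all coefficients of level `j` equal to `2^{−aj}`. -/
noncomputable def flatSeq (d : ℕ) (a : ℝ) : BSeq d := fun j _ => 2 ^ (-a * j)

/-- The sequence whose only nonzero coefficient on level `j` is `2^{−aj}`, at the index `k = 0`. -/
noncomputable def spikeSeq (d : ℕ) (a : ℝ) : BSeq d := fun j k => if k = 0 then 2 ^ (-a * j) else 0

lemma besovNormAt_flatSeq (hq : 0 < q) (j : ℕ) :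
    besovNormAt d s q (flatSeq d a) j = 2 ^ ((s + d / 2 - a) * j) := by
  have hcard : (Fintype.card (Fin d → Fin (2 ^ j)) : ℝ) = 2 ^ ((d : ℝ) * j) := by
    rw [Fintype.card_fun, Fintype.card_fin, Fintype.card_fin, ← pow_mul, mul_comm j d,
      ← Nat.cast_mul, Real.rpow_natCast, Nat.cast_pow, Nat.cast_ofNat]
  have hroot : (∑ k, |flatSeq d a j k| ^ q) ^ (1 / q) = 2 ^ ((d / q - a) * j) := by
    simp only [flatSeq, Finset.sum_const, nsmul_eq_mul, Finset.card_univ, hcard,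
      Real.abs_rpow_of_nonneg two_pos.le, abs_two]
    rw [← Real.rpow_mul two_pos.le, ← Real.rpow_add two_pos, ← Real.rpow_mul two_pos.le]
    congr 1
    field_simp
    ring
  rw [besovNormAt, hroot, ← Real.rpow_add two_pos]
  congr 1
  ring

lemma besovNormAt_spikeSeq (hq : 0 < q) (j : ℕ) :
    besovNormAt d s q (spikeSeq d a) j = 2 ^ ((s - d / q + d / 2 - a) * j) := by
  have hsum : ∑ k, |spikeSeq d a j k| ^ q = ((2 : ℝ) ^ (-a * j)) ^ q := by
    rw [Finset.sum_eq_single_of_mem 0 (Finset.mem_univ _)]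
    · rw [spikeSeq, if_pos rfl, abs_of_pos (by positivity)]
    · intro k _ hk
      rw [spikeSeq, if_neg hk, abs_zero, Real.zero_rpow hq.ne']
  rw [besovNormAt, hsum, one_div, Real.rpow_rpow_inv (by positivity) hq.ne',
    ← Real.rpow_add two_pos, ← add_mul, ← sub_eq_add_neg]

lemma memBesov_flatSeq_iff (hq : 0 < q) : MemBesov d s q (flatSeq d a) ↔ s + d / 2 ≤ a := by
  simp only [MemBesov, besovNormAt_flatSeq hq,
    exists_forall_rpow_mul_natCast_le_iff one_lt_two, sub_nonpos]

lemma memBesov_spikeSeq_iff (hq : 0 < q) :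
    MemBesov d s q (spikeSeq d a) ↔ s - d / q + d / 2 ≤ a := by
  simp only [MemBesov, besovNormAt_spikeSeq hq,
    exists_forall_rpow_mul_natCast_le_iff one_lt_two, sub_nonpos]

lemma exists_memBesov_not_memBesov {r p σ : ℝ} (hr : 0 < r) (hp : 0 < p)
    (hσ : s - max ((d : ℝ) / r - d / p) 0 < σ) :
    ∃ g : BSeq d, MemBesov d s r g ∧ ¬ MemBesov d σ p g := by
  rcases le_total ((d : ℝ) / r - d / p) 0 with h | h
  · rw [max_eq_right h] at hσ
    refine ⟨flatSeq d (s + d / 2), (memBesov_flatSeq_iff hr).2 le_rfl, ?_⟩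
    rw [memBesov_flatSeq_iff hp]
    linarith
  · rw [max_eq_left h] at hσ
    refine ⟨spikeSeq d (s - d / r + d / 2), (memBesov_spikeSeq_iff hr).2 le_rfl, ?_⟩
    rw [memBesov_spikeSeq_iff hp]
    linarith

end Saturation

section BesovTopology

variable {d : ℕ} {s r : ℝ}

/-- The parametrised line `t ↦ t • g` in `b^{s,∞}_r`; the probe is the push-forward of the
uniform law on `[0, 1]` along it. -/
def besovLine (hr : 0 < r) (g : BesovSp d s r) (t : ℝ) : BesovSp d s r := ⟨t • g.1, g.2.smul hr t⟩

lemma besovLine_injective (hr : 0 < r) {g : BesovSp d s r} (hg : g.1 ≠ 0) :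
    Function.Injective (besovLine hr g) := fun _ _ h =>
  smul_left_injective ℝ hg (congrArg Subtype.val h)

variable [τ : TopologicalSpace (BesovSp d s r)]

lemma IsBesovTopology.continuous_coeff (hτ : IsBesovTopology d s r τ) (hr : 0 < r) (j : ℕ)
    (k : Fin d → Fin (2 ^ j)) : Continuous fun y : BesovSp d s r => y.1 j k := by
  refine continuous_iff_continuousAt.2 fun x =>
    ((hτ x).tendsto_iff Metric.nhds_basis_ball).2 fun δ hδ => ?_
  set w : ℝ := 2 ^ ((s - d / r + d / 2) * j)
  have hw : 0 < w := by positivity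
  refine ⟨ENNReal.ofReal (w * δ), ENNReal.ofReal_pos.2 (mul_pos hw hδ), fun y hy => ?_⟩
  have hnorm : besovNormAt d s r (x.1 - y.1) j < w * δ :=
    (ENNReal.ofReal_lt_ofReal_iff (mul_pos hw hδ)).1 <|
      (le_iSup (fun j => ENNReal.ofReal (besovNormAt d s r (x.1 - y.1) j)) j).trans_lt hy
  rw [Metric.mem_ball', Real.dist_eq]
  exact lt_of_mul_lt_mul_left
    ((two_rpow_mul_abs_le_besovNormAt hr (x.1 - y.1) j k).trans_lt hnorm) hw.le

lemma IsBesovTopology.continuous_val (hτ : IsBesovTopology d s r τ) (hr : 0 < r) :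
    Continuous fun y : BesovSp d s r => y.1 :=
  continuous_pi fun j => continuous_pi fun k => hτ.continuous_coeff hr j k

lemma IsBesovTopology.t2Space (hτ : IsBesovTopology d s r τ) (hr : 0 < r) :
    T2Space (BesovSp d s r) :=
  T2Space.of_injective_continuous Subtype.val_injective (hτ.continuous_val hr)

lemma IsBesovTopology.continuous_besovLine (hτ : IsBesovTopology d s r τ) (hr : 0 < r)
    (g : BesovSp d s r) : Continuous (besovLine hr g) := by
  obtain ⟨C, hC⟩ := g.2
  refine continuous_iff_continuousAt.2 fun t₀ => (hτ _).tendsto_right_iff.2 fun δ hδ => ?_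
  have hlim : Filter.Tendsto (fun t : ℝ => ENNReal.ofReal (|t₀ - t| * C)) (nhds t₀) (nhds 0) := by
    have hcont : Continuous fun t : ℝ => ENNReal.ofReal (|t₀ - t| * C) :=
      ENNReal.continuous_ofReal.comp (by fun_prop)
    simpa using hcont.tendsto t₀
  have hdist (t : ℝ) :
      besovEDist d s r (besovLine hr g t₀).1 (besovLine hr g t).1 ≤
        ENNReal.ofReal (|t₀ - t| * C) := by
    refine iSup_le fun j => ENNReal.ofReal_le_ofReal ?_
    rw [besovLine, besovLine, ← sub_smul, besovNormAt_smul hr]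
    gcongr
    exact hC j
  filter_upwards [hlim.eventually_lt_const hδ] with t ht
  exact (hdist t).trans_lt ht

theorem isHaarNullBesov_setOf_mem_submodule (hτ : IsBesovTopology d s r τ) (hr : 0 < r)
    (W : Submodule ℝ (BSeq d)) (hW : MeasurableSet (W : Set (BSeq d))) {g : BSeq d}
    (hg : MemBesov d s r g) (hgW : g ∉ W) :
    IsHaarNullBesov d s r τ {c : BesovSp d s r | c.1 ∈ W} := by
  borelize (BesovSp d s r)
  have := hτ.t2Space hr
  have hg0 : g ≠ 0 := fun h => hgW (h ▸ W.zero_mem)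
  obtain ⟨μ, hμ, hK, hnull⟩ := exists_isProbabilityMeasure_of_injective_path
    ((hτ.continuous_besovLine hr ⟨g, hg⟩).comp continuous_subtype_val)
    ((besovLine_injective hr hg0).comp Subtype.val_injective)
  refine ⟨_, subset_rfl, (hτ.continuous_val hr).measurable hW, μ, hμ, hK, fun x => hnull _ ?_⟩
  refine ((subsingleton_setOf_smul_sub_mem W hgW x.1).preimage Subtype.val_injective).anti ?_
  rintro t ⟨a, ha, hta⟩
  have hdiff : (t : ℝ) • g - x.1 = a.1 := sub_eq_of_eq_add' hta
  rwa [Set.mem_preimage, Set.mem_ofPred_eq, hdiff]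

end BesovTopology

theorem besov_smoother_haarNull_general {d : ℕ} {s r p σ : ℝ} (hr : 0 < r) (hp : 0 < p)
    {τ : TopologicalSpace (BesovSp d s r)} (hτ : IsBesovTopology d s r τ)
    (hσ : s - max ((d : ℝ) / r - d / p) 0 < σ) :
    IsHaarNullBesov d s r τ {c : BesovSp d s r | MemBesov d σ p c.1} := by
  obtain ⟨g, hg, hgσ⟩ := exists_memBesov_not_memBesov hr hp hσ
  exact isHaarNullBesov_setOf_mem_submodule hτ hr (besovSubmodule d σ hp)
    measurableSet_setOf_memBesov hg hgσ

/-- For `1 ≤ p < ∞`, `1 ≤ r < ∞`, `s > d/r` and `s' = s − (d/r − d/p)₊`, for every `ε > 0`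
the set of elements of `b^{s,∞}_r` belonging to `b^{s'+ε,∞}_p` is Haar-null in `b^{s,∞}_r`. -/
theorem besov_smoother_haarNull (d : ℕ) (hd : 1 ≤ d) (p r s : ℝ) (hp : 1 ≤ p) (hr : 1 ≤ r)
    (hs : (d : ℝ) / r < s)
    (τ : TopologicalSpace (BesovSp d s r)) (hτ : IsBesovTopology d s r τ)
    (ε : ℝ) (hε : 0 < ε) :
    IsHaarNullBesov d s r τ
      {c : BesovSp d s r |
        MemBesov d (s - max ((d : ℝ) / r - (d : ℝ) / p) 0 + ε) p c.1} :=
  besov_smoother_haarNull_general (by linarith) (by linarith) hτ (by linarith)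
end

section
/- Let d ≥ 1, 1 ≤ p < ∞, 1 ≤ r < ∞ and s > d/r. Set α̃ = 2s/(2s+d) if r > pd/(2s+d), and α̃ = 2(s − d/r + d/p)/(2(s − d/r) + d) otherwise, and let g be the sequence with g_{j,k} = j^{−a} 2^{−(s−d/r+d/2)j} 2^{−(d/r)J} (a = 1 + 3/r, J the irreducibility index of (j,k)). Then for every f ∈ b^{s,∞}_r and every ε with 0 < ε < 1 − α̃, the set { α ∈ ℝ : f + α·g ∈ W((1−α̃−ε)p, p) } has Lebesgue measure zero (it contains at most one point). -/
/-!
The space `W(w,p)` is a vector space: it is a weak `L^w` space for the measure giving mass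
`2^{j(dp/2−d)}` to each index of level `j`. A line `f + ℝ·g` with `g ∉ W(w,p)` therefore meets it
in at most one point.

To see that `g` has infinite quasi-norm, keep only level `j` and take the threshold
`λ_j = j^{−a} 2^{−σj} / 2`. If at least `2^{nj}` coefficients of level `j` exceed it, the quasi-norm
is at least a power of `j` times `2^{(dp/2−d+n−σw)j}`, which is unbounded when the exponent is
positive. In the dense regime `r > pd/(2s+d)` all the coefficients of the level serve (`J ≤ j`, so
`σ = s + d/2` and `n = d`). In the sparse regime `k = 0` alone suffices (`J = 0`, so
`σ = s − d/r + d/2` and `n = 0`). In both cases `w = (1−α̃)p` is the critical value at which the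
exponent vanishes.
-/

open MeasureTheory
open scoped ENNReal BigOperators

section Line

variable {K E : Type*} [DivisionRing K] [AddCommGroup E] [Module K E]

lemma subsingleton_setOf_add_smul_mem (V : Submodule K E) {g : E} (hg : g ∉ V) (f : E) :
    {α : K | f + α • g ∈ V}.Subsingleton := by
  intro α hα β hβ
  by_contra hne
  have hdiff : (α - β) • g ∈ V := by
    simpa only [add_sub_add_left_eq_sub, sub_smul] using V.sub_mem hα hβ
  exact hg ((V.smul_mem_iff (sub_ne_zero.mpr hne)).mp hdiff)

end Line

lemma tendsto_rpow_mul_rpow_mul_atTop (a : ℝ) {b δ : ℝ} (hb : 1 < b) (hδ : 0 < δ) :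
    Filter.Tendsto (fun x : ℝ => x ^ a * b ^ (δ * x)) Filter.atTop Filter.atTop := by
  refine (tendsto_exp_mul_div_rpow_atTop (-a) (Real.log b * δ)
    (mul_pos (Real.log_pos hb) hδ)).congr' ?_
  filter_upwards [Filter.eventually_ge_atTop 0] with x hx
  rw [Real.rpow_neg hx, div_inv_eq_mul, Real.rpow_def_of_pos (zero_lt_one.trans hb), mul_assoc,
    mul_comm]

lemma const_mul_rpow_mul_rpow {C x y a b n σ w : ℝ} (hC : 0 ≤ C) (hx : 0 ≤ x) (hy : 0 < y) :
    C ^ w * (x ^ (a * w) * y ^ ((b + n - σ * w) * x)) =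
      (C * (x ^ a * y ^ (-σ * x))) ^ w * (y ^ (b * x) * y ^ (n * x)) := by
  have hexp : (b + n - σ * w) * x = -σ * x * w + (b * x + n * x) := by ring
  rw [hexp, Real.rpow_add hy, Real.rpow_add hy, Real.mul_rpow hC (by positivity),
    Real.mul_rpow (by positivity) (by positivity), ← Real.rpow_mul hx, ← Real.rpow_mul hy.le]
  ring

section WeakBesov

variable {d : ℕ} {p w lam mu t : ℝ} {c : BSeq d}

/-- The distribution function `λ ↦ Σ_j 2^{j(dp/2−d)} #{k : |c_{j,k}| > λ}` of a sequence `c`, for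
the measure giving mass `2^{j(dp/2−d)}` to each index of level `j`. -/
noncomputable def wBesovDistribution (p : ℝ) (c : BSeq d) (lam : ℝ) : ℝ≥0∞ :=
  ∑' j : ℕ, ENNReal.ofReal ((2 : ℝ) ^ (((d : ℝ) * p / 2 - (d : ℝ)) * (j : ℝ))) *
    (Nat.card {k : Fin d → Fin (2 ^ j) // lam < |c j k|} : ℝ≥0∞)

lemma wBesovDistribution_add_le (u v : BSeq d) :
    wBesovDistribution p (u + v) (lam + mu) ≤
      wBesovDistribution p u lam + wBesovDistribution p v mu := by
  unfold wBesovDistribution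
  rw [← ENNReal.tsum_add]
  refine ENNReal.tsum_le_tsum fun j => ?_
  have hsub : {k | lam + mu < |(u + v) j k|} ⊆ {k | lam < |u j k|} ∪ {k | mu < |v j k|} := by
    intro k hk
    by_contra! hle
    simp only [Set.mem_union, Set.mem_ofPred_eq, not_or, not_lt] at hk hle
    exact absurd (hk.trans_le (abs_add_le _ _)) (add_le_add hle.1 hle.2).not_gt
  have hcard := (Nat.card_mono (Set.toFinite _) hsub).trans (Set.card_union_le _ _)
  rw [← mul_add, ← Nat.cast_add]
  exact mul_le_mul_right (Nat.cast_le.mpr hcard) _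

lemma wBesovDistribution_smul (ht : t ≠ 0) :
    wBesovDistribution p (t • c) (|t| * lam) = wBesovDistribution p c lam := by
  simp only [wBesovDistribution, Pi.smul_apply, smul_eq_mul, abs_mul,
    mul_lt_mul_iff_right₀ (abs_pos.mpr ht)]

lemma ofReal_rpow_mul_wBesovDistribution_le_wBesovNorm (hlam : 0 < lam) :
    ENNReal.ofReal (lam ^ w) * wBesovDistribution p c lam ≤ wBesovNorm d w p c :=
  le_iSup (fun l : Set.Ioi (0 : ℝ) => ENNReal.ofReal ((l : ℝ) ^ w) * wBesovDistribution p c l)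
    ⟨lam, hlam⟩

lemma wBesovNorm_le_iff {C : ℝ≥0∞} :
    wBesovNorm d w p c ≤ C ↔
      ∀ lam : ℝ, 0 < lam → ENNReal.ofReal (lam ^ w) * wBesovDistribution p c lam ≤ C := by
  simp only [wBesovNorm, wBesovDistribution, iSup_le_iff, Subtype.forall, Set.mem_Ioi]

lemma wBesovNorm_zero : wBesovNorm d w p 0 = 0 := by
  refine le_zero_iff.mp (wBesovNorm_le_iff.mpr fun lam hlam => ?_)
  simp [wBesovDistribution, hlam.not_gt]

lemma wBesovNorm_add_le (u v : BSeq d) :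
    wBesovNorm d w p (u + v) ≤
      ENNReal.ofReal (2 ^ w) * (wBesovNorm d w p u + wBesovNorm d w p v) := by
  refine wBesovNorm_le_iff.mpr fun lam hlam => ?_
  obtain ⟨mu, rfl⟩ : ∃ mu, lam = 2 * mu := ⟨lam / 2, by ring⟩
  have hmu : 0 < mu := by linarith
  calc ENNReal.ofReal ((2 * mu) ^ w) * wBesovDistribution p (u + v) (2 * mu)
      ≤ ENNReal.ofReal ((2 * mu) ^ w) *
          (wBesovDistribution p u mu + wBesovDistribution p v mu) := by
        rw [two_mul mu]
        gcongr
        exact wBesovDistribution_add_le u v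
    _ = ENNReal.ofReal (2 ^ w) * (ENNReal.ofReal (mu ^ w) * wBesovDistribution p u mu +
          ENNReal.ofReal (mu ^ w) * wBesovDistribution p v mu) := by
        rw [Real.mul_rpow zero_le_two hmu.le, ENNReal.ofReal_mul (by positivity), mul_assoc,
          mul_add]
    _ ≤ ENNReal.ofReal (2 ^ w) * (wBesovNorm d w p u + wBesovNorm d w p v) := by
        gcongr <;> exact ofReal_rpow_mul_wBesovDistribution_le_wBesovNorm hmu

lemma wBesovNorm_smul_le (ht : t ≠ 0) :
    wBesovNorm d w p (t • c) ≤ ENNReal.ofReal (|t| ^ w) * wBesovNorm d w p c := by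
  have habs : 0 < |t| := abs_pos.mpr ht
  refine wBesovNorm_le_iff.mpr fun lam hlam => ?_
  obtain ⟨mu, rfl⟩ : ∃ mu, lam = |t| * mu := ⟨lam / |t|, by field_simp⟩
  have hmu : 0 < mu := pos_of_mul_pos_right hlam habs.le
  rw [wBesovDistribution_smul ht, Real.mul_rpow habs.le hmu.le, ENNReal.ofReal_mul (by positivity),
    mul_assoc]
  gcongr
  exact ofReal_rpow_mul_wBesovDistribution_le_wBesovNorm hmu

/-- The weak Besov space `W(w,p)` as a vector space of sequences. -/
noncomputable def weakBesov (d : ℕ) (w p : ℝ) : Submodule ℝ (BSeq d) where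
  carrier := {c | MemWBesov d w p c}
  zero_mem' := by simp [MemWBesov, wBesovNorm_zero]
  add_mem' {u v} hu hv := ne_top_of_le_ne_top
    (ENNReal.mul_ne_top ENNReal.ofReal_ne_top (ENNReal.add_ne_top.mpr ⟨hu, hv⟩))
    (wBesovNorm_add_le u v)
  smul_mem' t c hc := by
    rcases eq_or_ne t 0 with rfl | ht
    · simp [MemWBesov, wBesovNorm_zero]
    · exact ne_top_of_le_ne_top (ENNReal.mul_ne_top ENNReal.ofReal_ne_top hc)
        (wBesovNorm_smul_le ht)

lemma ofReal_rpow_mul_card_le_wBesovNorm (hlam : 0 < lam) (j : ℕ) :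
    ENNReal.ofReal (lam ^ w * ((2 : ℝ) ^ ((d * p / 2 - d) * j) *
      Nat.card {k : Fin d → Fin (2 ^ j) // lam < |c j k|})) ≤ wBesovNorm d w p c := by
  refine le_trans ?_ (ofReal_rpow_mul_wBesovDistribution_le_wBesovNorm hlam)
  rw [ENNReal.ofReal_mul (by positivity), ENNReal.ofReal_mul (by positivity),
    ENNReal.ofReal_natCast]
  gcongr
  exact ENNReal.le_tsum j

lemma ofReal_le_wBesovNorm_of_two_rpow_le_card {a σ n : ℝ} {j : ℕ} (hj : 1 ≤ j)
    (hc : (2 : ℝ) ^ (n * j) ≤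
      Nat.card {k : Fin d → Fin (2 ^ j) // (j : ℝ) ^ a * (2 : ℝ) ^ (-σ * j) ≤ |c j k|}) :
    ENNReal.ofReal ((2⁻¹ : ℝ) ^ w *
      ((j : ℝ) ^ (a * w) * (2 : ℝ) ^ ((d * p / 2 - d + n - σ * w) * j))) ≤
        wBesovNorm d w p c := by
  have hj0 : (0 : ℝ) < j := by exact_mod_cast hj
  have hthr : 0 < (j : ℝ) ^ a * (2 : ℝ) ^ (-σ * j) := by positivity
  have hlam : 0 < 2⁻¹ * ((j : ℝ) ^ a * (2 : ℝ) ^ (-σ * j)) := by positivity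
  have hhalf : 2⁻¹ * ((j : ℝ) ^ a * (2 : ℝ) ^ (-σ * j)) < (j : ℝ) ^ a * (2 : ℝ) ^ (-σ * j) :=
    mul_lt_of_lt_one_left hthr (by norm_num)
  have hcard : (2 : ℝ) ^ (n * j) ≤ Nat.card {k : Fin d → Fin (2 ^ j) //
      2⁻¹ * ((j : ℝ) ^ a * (2 : ℝ) ^ (-σ * j)) < |c j k|} :=
    hc.trans <| Nat.cast_le.mpr <| Nat.card_mono (Set.toFinite _) fun _ hk => hhalf.trans_le hk
  rw [const_mul_rpow_mul_rpow (by norm_num) hj0.le two_pos]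
  refine le_trans ?_ (ofReal_rpow_mul_card_le_wBesovNorm hlam j)
  gcongr

lemma notMem_weakBesov_of_two_rpow_le_card {a σ n : ℝ} (hδ : σ * w < d * p / 2 - d + n)
    (hc : ∀ᶠ j : ℕ in Filter.atTop, (2 : ℝ) ^ (n * j) ≤
      Nat.card {k : Fin d → Fin (2 ^ j) // (j : ℝ) ^ a * (2 : ℝ) ^ (-σ * j) ≤ |c j k|}) :
    c ∉ weakBesov d w p := by
  suffices wBesovNorm d w p c = ⊤ from not_not_intro this
  have hdiv := ENNReal.tendsto_ofReal_atTop.comp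
    (((tendsto_rpow_mul_rpow_mul_atTop (a * w) one_lt_two (sub_pos.mpr hδ)).const_mul_atTop
      (by positivity : (0 : ℝ) < 2⁻¹ ^ w)).comp tendsto_natCast_atTop_atTop)
  refine top_le_iff.mp (le_of_tendsto hdiv ?_)
  filter_upwards [Filter.eventually_ge_atTop 1, hc] with j hj hcard
  exact ofReal_le_wBesovNorm_of_two_rpow_le_card hj hcard

end WeakBesov

section SaturatingSequence

variable {d j : ℕ} {p r s w : ℝ}

lemma irredIndex_le (k : Fin d → Fin (2 ^ j)) : irredIndex d j k ≤ j :=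
  Nat.find_min' _ fun _ => by simp

lemma irredIndex_zero : irredIndex d j 0 = 0 :=
  Nat.le_zero.mp (Nat.find_min' _ fun _ => by simp)

lemma gSeq_apply (hj : 1 ≤ j) (k : Fin d → Fin (2 ^ j)) :
    gSeq d s r j k = (j : ℝ) ^ (-(1 + 3 / r)) *
      (2 : ℝ) ^ (-((s - d / r + d / 2) * j + d / r * irredIndex d j k)) := by
  rw [gSeq, if_neg (by omega), mul_assoc, ← Real.rpow_add two_pos]
  congr 2
  ring

lemma rpow_mul_rpow_le_abs_gSeq (hr : 0 < r) (hj : 1 ≤ j) (k : Fin d → Fin (2 ^ j)) :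
    (j : ℝ) ^ (-(1 + 3 / r)) * (2 : ℝ) ^ (-(s + d / 2) * j) ≤ |gSeq d s r j k| := by
  have hJ : (d : ℝ) / r * irredIndex d j k ≤ d / r * j := by
    gcongr
    exact irredIndex_le k
  rw [gSeq_apply hj]
  refine le_trans ?_ (le_abs_self _)
  gcongr
  · exact one_le_two
  · linarith

lemma gSeq_notMem_weakBesov_of_dense (hr : 0 < r) (hw : (s + d / 2) * w < d * p / 2) :
    gSeq d s r ∉ weakBesov d w p := by
  refine notMem_weakBesov_of_two_rpow_le_card (a := -(1 + 3 / r)) (σ := s + d / 2) (n := d)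
    (by linarith) ?_
  filter_upwards [Filter.eventually_ge_atTop 1] with j hj
  refine le_of_eq ?_
  rw [Nat.card_congr (Equiv.subtypeUnivEquiv (rpow_mul_rpow_le_abs_gSeq hr hj)), mul_comm,
    Real.rpow_mul zero_le_two]
  simp

lemma gSeq_notMem_weakBesov_of_sparse (hw : (s - d / r + d / 2) * w < d * p / 2 - d) :
    gSeq d s r ∉ weakBesov d w p := by
  refine notMem_weakBesov_of_two_rpow_le_card (a := -(1 + 3 / r)) (σ := s - d / r + d / 2)
    (n := 0) (by linarith) ?_
  filter_upwards [Filter.eventually_ge_atTop 1] with j hj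
  have hzero : (j : ℝ) ^ (-(1 + 3 / r)) * (2 : ℝ) ^ (-(s - d / r + d / 2) * j) ≤
      |gSeq d s r j 0| := by
    rw [gSeq_apply hj, irredIndex_zero, Nat.cast_zero, mul_zero, add_zero, neg_mul]
    exact le_abs_self _
  rw [zero_mul, Real.rpow_zero, Nat.one_le_cast]
  exact Nat.card_pos_iff.mpr ⟨⟨0, hzero⟩, inferInstance⟩

lemma mul_one_sub_alphaTilde_of_dense (hs : s + d / 2 ≠ 0) (h : p * d / (2 * s + d) < r) :
    (s + d / 2) * (1 - alphaTilde d s r p) = d / 2 := by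
  have hden : 2 * s + d ≠ 0 := fun hzero => hs (by linarith)
  rw [alphaTilde, if_pos h, one_sub_div hden, ← mul_div_assoc, div_eq_iff hden]
  ring

lemma mul_one_sub_alphaTilde_of_sparse (hs : s - d / r + d / 2 ≠ 0)
    (h : ¬ p * d / (2 * s + d) < r) :
    (s - d / r + d / 2) * (1 - alphaTilde d s r p) = d / 2 - d / p := by
  have hden : 2 * (s - d / r) + d ≠ 0 := fun hzero => hs (by linarith)
  rw [alphaTilde, if_neg h, one_sub_div hden, ← mul_div_assoc, div_eq_iff hden]
  ring

lemma gSeq_notMem_weakBesov (hp : 0 < p) (hr : 0 < r) (hs : 0 < s - d / r + d / 2) {ε : ℝ}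
    (hε : 0 < ε) : gSeq d s r ∉ weakBesov d ((1 - alphaTilde d s r p - ε) * p) p := by
  by_cases h : p * d / (2 * s + d) < r
  · have hσ : 0 < s + d / 2 := by linarith [show (0 : ℝ) ≤ d / r by positivity]
    refine gSeq_notMem_weakBesov_of_dense hr ?_
    calc (s + d / 2) * ((1 - alphaTilde d s r p - ε) * p)
        = (s + d / 2) * (1 - alphaTilde d s r p) * p - (s + d / 2) * ε * p := by ring
      _ < (s + d / 2) * (1 - alphaTilde d s r p) * p := sub_lt_self _ (by positivity)
      _ = d * p / 2 := by rw [mul_one_sub_alphaTilde_of_dense hσ.ne' h]; ring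
  · refine gSeq_notMem_weakBesov_of_sparse ?_
    calc (s - d / r + d / 2) * ((1 - alphaTilde d s r p - ε) * p)
        = (s - d / r + d / 2) * (1 - alphaTilde d s r p) * p
            - (s - d / r + d / 2) * ε * p := by ring
      _ < (s - d / r + d / 2) * (1 - alphaTilde d s r p) * p := sub_lt_self _ (by positivity)
      _ = d * p / 2 - d := by
        rw [mul_one_sub_alphaTilde_of_sparse hs.ne' h]
        field_simp

end SaturatingSequence

theorem measure_translate_wBesov_eq_zero_general (d : ℕ) (p r s : ℝ) (hp : 0 < p) (hr : 0 < r)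
    (hs : 0 < s - d / r + d / 2) (f : BSeq d) (ε : ℝ) (hε : 0 < ε) :
    {α : ℝ | MemWBesov d ((1 - alphaTilde d s r p - ε) * p) p
      (f + α • gSeq d s r)}.Subsingleton :=
  subsingleton_setOf_add_smul_mem (weakBesov d _ p) (gSeq_notMem_weakBesov hp hr hs hε) f

/-- For every `f ∈ b^{s,∞}_r` and every `0 < ε < 1 − α̃`, the set of `α ∈ ℝ` such that
`f + α·g ∈ W((1−α̃−ε)p, p)` has Lebesgue measure zero. -/
theorem measure_translate_wBesov_eq_zero (d : ℕ) (hd : 1 ≤ d) (p r s : ℝ)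
    (hp : 1 ≤ p) (hr : 1 ≤ r) (hs : (d : ℝ) / r < s)
    (f : BSeq d) (hf : MemBesov d s r f)
    (ε : ℝ) (hε1 : 0 < ε) (hε2 : ε < 1 - alphaTilde d s r p) :
    volume {α : ℝ | MemWBesov d ((1 - alphaTilde d s r p - ε) * p) p (f + α • gSeq d s r)}
      = 0 :=
  (measure_translate_wBesov_eq_zero_general d p r s (by linarith) (by linarith)
    (by linarith [show (0 : ℝ) ≤ d / 2 by positivity]) f ε hε1).measure_zero volume
end
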